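/- Let r ≥ 1, α ∈ K nonzero, and γ_1, …, γ_r ∈ K none of which is a non-positive integer. Then the intersection over s = 1, …, r of the K-subspaces ((θ+γ_1)∘⋯∘(θ+γ_s))((t−α)·K[t]) of K[t] equals ((θ+γ_1)∘⋯∘(θ+γ_r))((t−α)^r·K[t]), where θ = t·d/dt. -/

import Mathlib

open Polynomial

/-- The Euler operator `θ = t·d/dt` on the polynomial ring `K[t]`. -/
noncomputable def theta (K : Type*) [CommRing K] : Module.End K (Polynomial K) :=
  (LinearMap.mulLeft K (X : Polynomial K)) ∘ₗ
    (Polynomial.derivative : Polynomial K →ₗ[K] Polynomial K)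

/-- Composition `f 0 ∘ f 1 ∘ ⋯ ∘ f (k−1)` of a family of endomorphisms. -/
noncomputable def opProd (K : Type*) [CommRing K]
    (f : ℕ → Module.End K (Polynomial K)) (k : ℕ) : Module.End K (Polynomial K) :=
  ((List.range k).map f).prod

theorem theta_add_smul_one_apply {K : Type*} [CommRing K] (c : K) (P : K[X]) :
    (theta K + c • (1 : Module.End K K[X])) P = X * derivative P + C c * P := by
  simp [theta, smul_eq_C_mul]

theorem theta_add_smul_one_injective {K : Type*} [Field K] (c : K)
    (hc : ∀ n : ℕ, c ≠ -(n : K)) :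
    Function.Injective (theta K + c • (1 : Module.End K K[X])) := by
  rw [injective_iff_map_eq_zero]
  intro P hP
  rw [theta_add_smul_one_apply] at hP
  ext n
  have h : ((n : K) + c) * P.coeff n = 0 := by
    have h := congrArg (fun Q : K[X] => Q.coeff n) hP
    cases n with
    | zero => simpa using h
    | succ n =>
      simp only [coeff_add, coeff_X_mul, coeff_derivative, coeff_C_mul, coeff_zero] at h
      push_cast
      linear_combination h
  refine (mul_eq_zero.mp h).resolve_left fun h0 => hc n ?_
  linear_combination h0

theorem opProd_succ {K : Type*} [CommRing K] (f : ℕ → Module.End K K[X]) (k : ℕ) :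
    opProd K f (k + 1) = opProd K f k * f k := by
  simp [opProd, List.range_succ]

theorem opProd_injective {K : Type*} [CommRing K] (f : ℕ → Module.End K K[X]) (k : ℕ)
    (hf : ∀ j < k, Function.Injective (f j)) : Function.Injective (opProd K f k) := by
  induction k with
  | zero => exact fun _ _ h => h
  | succ k ih =>
    rw [opProd_succ]
    exact (ih fun j hj => hf j (by omega)).comp (hf k (by omega))

theorem mem_range_comp_mulLeft {K : Type*} [CommRing K] (A : Module.End K K[X]) (D P : K[X]) :
    P ∈ LinearMap.range (A ∘ₗ LinearMap.mulLeft K D) ↔ ∃ W, D ∣ W ∧ A W = P := by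
  constructor
  · rintro ⟨V, rfl⟩
    exact ⟨D * V, dvd_mul_right _ _, rfl⟩
  · rintro ⟨_, ⟨V, rfl⟩, rfl⟩
    exact ⟨V, rfl⟩

theorem theta_add_smul_one_X_sub_C_pow_mul {K : Type*} [CommRing K] (a c : K) (n : ℕ)
    (Z : K[X]) :
    (theta K + c • (1 : Module.End K K[X])) ((X - C a) ^ (n + 1) * Z) =
      (X - C a) ^ n *
        ((n + 1 : K[X]) * X * Z + (X - C a) * (X * derivative Z + C c * Z)) := by
  rw [theta_add_smul_one_apply]
  simp only [derivative_mul, derivative_X_sub_C_pow, Nat.add_sub_cancel, Nat.cast_add,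
    Nat.cast_one, map_add, map_natCast, map_one]
  ring

theorem X_sub_C_pow_dvd_theta_add_smul_one {K : Type*} [CommRing K] (a c : K) (n : ℕ)
    {W : K[X]} (h : (X - C a) ^ (n + 1) ∣ W) :
    (X - C a) ^ n ∣ (theta K + c • (1 : Module.End K K[X])) W := by
  obtain ⟨Z, rfl⟩ := h
  rw [theta_add_smul_one_X_sub_C_pow_mul]
  exact dvd_mul_right _ _

/-- At a nonzero root, `θ + c` lowers the multiplicity by exactly one. -/
theorem X_sub_C_pow_succ_dvd_of_dvd_theta_add_smul_one {K : Type*} [Field K] [CharZero K]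
    {a : K} (ha : a ≠ 0) (c : K) (n : ℕ) {W : K[X]} (hW : X - C a ∣ W)
    (h : (X - C a) ^ n ∣ (theta K + c • (1 : Module.End K K[X])) W) :
    (X - C a) ^ (n + 1) ∣ W := by
  induction n with
  | zero => simpa using hW
  | succ n ih =>
    obtain ⟨Z, rfl⟩ := ih ((pow_dvd_pow _ n.le_succ).trans h)
    rw [theta_add_smul_one_X_sub_C_pow_mul, pow_succ (X - C a) n,
      mul_dvd_mul_iff_left (pow_ne_zero n (X_sub_C_ne_zero a)),
      dvd_add_left (dvd_mul_right _ _), dvd_iff_isRoot] at h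
    rw [pow_succ]
    refine mul_dvd_mul_left _ (dvd_iff_isRoot.mpr ?_)
    have hn : (n : K) + 1 ≠ 0 := by exact_mod_cast n.succ_ne_zero
    simpa [IsRoot.def, hn, ha] using h

theorem iInf_range_opProd_eq {K : Type*} [Field K] [CharZero K] (r : ℕ)
    {α : K} (hα : α ≠ 0) (γ : ℕ → K) (hγ : ∀ w < r, ∀ n : ℕ, γ w ≠ -(n : K)) :
    (⨅ s ∈ Finset.Icc 1 r,
        LinearMap.range
          ((opProd K (fun j => theta K + γ j • (1 : Module.End K K[X])) s) ∘ₗ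
            LinearMap.mulLeft K (X - C α))) =
      LinearMap.range
        ((opProd K (fun j => theta K + γ j • (1 : Module.End K K[X])) r) ∘ₗ
          LinearMap.mulLeft K ((X - C α) ^ r)) := by
  induction r with
  | zero =>
    symm
    have h0 : opProd K (fun j => theta K + γ j • (1 : Module.End K K[X])) 0 = LinearMap.id :=
      rfl
    simp [h0]
  | succ r ih =>
    have hγr : ∀ w < r, ∀ n : ℕ, γ w ≠ -(n : K) := fun w hw => hγ w (by omega)
    rw [← Finset.insert_Icc_right_eq_Icc_add_one (by omega), Finset.iInf_insert, ih hγr]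
    ext P
    rw [Submodule.mem_inf]
    simp only [mem_range_comp_mulLeft, opProd_succ, Module.End.mul_apply]
    constructor
    · rintro ⟨⟨W, hW, hWP⟩, V, hV, hVP⟩
      have hinj := opProd_injective (fun j => theta K + γ j • (1 : Module.End K K[X])) r
        fun j hj => theta_add_smul_one_injective (γ j) (hγr j hj)
      obtain rfl := hinj (hWP.trans hVP.symm)
      exact ⟨W, X_sub_C_pow_succ_dvd_of_dvd_theta_add_smul_one hα _ _ hW hV, hWP⟩
    · rintro ⟨W, hW, hWP⟩
      exact ⟨⟨W, (dvd_pow_self _ r.succ_ne_zero).trans hW, hWP⟩, _,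
        X_sub_C_pow_dvd_theta_add_smul_one _ _ _ hW, hWP⟩

/-- Let `r ≥ 1`, `α ∈ K` nonzero, and `γ_1, …, γ_r ∈ K` (indexed here by `γ 0, …, γ (r−1)`)
none of which is a non-positive integer.  The intersection over `s = 1, …, r` of the
subspaces `((θ+γ_1)∘⋯∘(θ+γ_s))((t−α)·K[t])` equals
`((θ+γ_1)∘⋯∘(θ+γ_r))((t−α)^r·K[t])`. -/
theorem stmt5 (K : Type*) [Field K] [CharZero K] (r : ℕ) (hr : 0 < r)
    (α : K) (hα : α ≠ 0) (γ : ℕ → K)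
    (hγ : ∀ w < r, ∀ n : ℕ, γ w ≠ -(n : K)) :
    (⨅ s ∈ Finset.Icc 1 r,
        LinearMap.range
          ((opProd K (fun j => theta K + γ j • (1 : Module.End K (Polynomial K))) s) ∘ₗ
            LinearMap.mulLeft K ((X : Polynomial K) - C α))) =
      LinearMap.range
        ((opProd K (fun j => theta K + γ j • (1 : Module.End K (Polynomial K))) r) ∘ₗ
          LinearMap.mulLeft K (((X : Polynomial K) - C α) ^ r)) := by
  exact iInf_range_opProd_eq r hα γ hγ
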